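/- arXiv:1206.5336 — 4 statements merged into one kernel-verified Lean document; each statement's English description precedes it below -/
import Mathlib

section
/- For all integers n ≥ 2 and t ≥ 0 with t + 1 ≤ n, and every family of real numbers Δ_0, Δ_1, …, Δ_t with each Δ_i ≥ 1 and Δ_0 + Δ_1 + ⋯ + Δ_t = n, one has Σ_{i=0}^{t} Δ_i · log₂(n/Δ_i) ≥ t · log₂ n. -/
open Real Finset

/-!
The function `f x = x * log (N / x)` is concave on `[1, N]`, with `f 1 = log N` and `f N = 0`, so it
lies above the chord `(N - x) / (N - 1) * log N`, hence above the weaker linear bound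
`(1 - x / N) * log N` (`one_sub_div_mul_log_le`). Summed over the gaps, whose total is `N = n`,
the linear bound gives exactly `((t + 1) - 1) * log n`.
-/

/-- The chord bound for the concave function `x ↦ x * log (N / x)` on `[1, N]`, weakened by
replacing the denominator `N - 1` by `N`. -/
lemma one_sub_div_mul_log_le {N x : ℝ} (hN : 1 < N) (hx : 1 ≤ x) (hxN : x ≤ N) :
    (1 - x / N) * Real.log N ≤ x * Real.log (N / x) := by
  have hN1 : 0 < N - 1 := by linarith
  have hL : 0 ≤ Real.log N := Real.log_nonneg hN.le
  -- Convexity of `x * log x` at `x = (N - x) / (N - 1) • 1 + (x - 1) / (N - 1) • N`.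
  have hconv := Real.convexOn_mul_log.2 (Set.mem_Ici.2 zero_le_one)
    (Set.mem_Ici.2 (by linarith : (0 : ℝ) ≤ N))
    (div_nonneg (by linarith : 0 ≤ N - x) hN1.le) (div_nonneg (by linarith : 0 ≤ x - 1) hN1.le)
    (by field_simp; ring)
  have hcomb : (N - x) / (N - 1) * 1 + (x - 1) / (N - 1) * N = x := by
    field_simp; ring
  simp only [smul_eq_mul, hcomb, Real.log_one, mul_zero, zero_add] at hconv
  rw [Real.log_div (by linarith) (by linarith)]
  have hchord : 1 - x / N ≤ (N - x) / (N - 1) := by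
    rw [one_sub_div (by linarith)]
    exact div_le_div_of_nonneg_left (by linarith) hN1 (by linarith)
  have hmul := mul_le_mul_of_nonneg_right hchord hL
  linear_combination hmul + hconv + Real.log N * hcomb

/-- Answering t distinct queries forces the entropy bound to be at least t log₂ n. -/
theorem entropy_bound_ge_t_log_n (n t : ℕ) (hn : 2 ≤ n) (ht : t + 1 ≤ n)
    (Δ : ℕ → ℝ) (hΔ : ∀ i ∈ Finset.range (t + 1), 1 ≤ Δ i)
    (hsum : (∑ i ∈ Finset.range (t + 1), Δ i) = (n : ℝ)) :
    (t : ℝ) * logb 2 (n : ℝ) ≤ ∑ i ∈ Finset.range (t + 1), Δ i * logb 2 ((n : ℝ) / Δ i) := by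
  have hn1 : (1 : ℝ) < n := by exact_mod_cast hn
  have hle : ∀ i ∈ Finset.range (t + 1), Δ i ≤ n := fun i hi => by
    rw [← hsum]
    exact Finset.single_le_sum (fun j hj => zero_le_one.trans (hΔ j hj)) hi
  have htotal : ∑ i ∈ Finset.range (t + 1), (1 - Δ i / n) * logb 2 (n : ℝ)
      = t * logb 2 (n : ℝ) := by
    rw [← Finset.sum_mul, Finset.sum_sub_distrib, ← Finset.sum_div, hsum,
      div_self (by linarith)]
    simp
  rw [← htotal]
  refine Finset.sum_le_sum fun i hi => ?_
  simp only [Real.logb, ← mul_div_assoc]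
  exact div_le_div_of_nonneg_right (one_sub_div_mul_log_le hn1 (hΔ i hi) (hle i hi))
    (Real.log_nonneg one_le_two)
end

section
/- Let c be a real number with 1/2 ≤ c < 1 and let a ≥ 0 be a real constant. Then there exists a constant K = K(c, a) > 0 such that for every real Δ > 0, every integer r ≥ 1, and every finite sequence of real numbers g_1, …, g_r satisfying 0 < g_j ≤ Δ · c^{(j−1) − a} for every j and g_1 + ⋯ + g_r ≤ Δ, one has Σ_{j=1}^{r} g_j · log₂(Δ/g_j) ≤ K · Δ. -/
/-!
Put `x = g / Δ`. The elementary inequality `log y ≤ 2 √y` at `y = 1 / x` gives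
`x log₂ (1 / x) ≤ (2 / log 2) √x`. Under the hypothesis `x_j ≤ c ^ (j - 1 - a)` the right-hand side
is dominated by a geometric sequence of ratio `√c < 1`, whose sum is bounded independently of `r`.
-/

open Real Finset

theorem mul_logb_inv_le {x : ℝ} (hx : 0 < x) :
    x * logb 2 x⁻¹ ≤ 2 / log 2 * x ^ (1 / 2 : ℝ) := by
  have hlog2 : 0 < log 2 := log_pos one_lt_two
  have hlog : log x⁻¹ ≤ x⁻¹ ^ (1 / 2 : ℝ) / (1 / 2) :=
    log_le_rpow_div (inv_nonneg.2 hx.le) (by norm_num)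
  have hpow : x * x⁻¹ ^ (1 / 2 : ℝ) = x ^ (1 / 2 : ℝ) := by
    rw [inv_rpow hx.le, ← rpow_neg hx.le]
    nth_rewrite 1 [← rpow_one x]
    rw [← rpow_add hx]
    norm_num
  calc x * logb 2 x⁻¹ = x * log x⁻¹ / log 2 := by rw [logb, mul_div_assoc]
    _ ≤ x * (x⁻¹ ^ (1 / 2 : ℝ) / (1 / 2)) / log 2 := by gcongr
    _ = 2 / log 2 * (x * x⁻¹ ^ (1 / 2 : ℝ)) := by ring
    _ = 2 / log 2 * x ^ (1 / 2 : ℝ) := by rw [hpow]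

/-- Key claim behind Lemma 3.1: geometrically decaying gaps inside a gap of size Δ
    have entropy Σ g_j log₂(Δ/g_j) = O(Δ). -/
theorem geometric_gaps_entropy_linear (c a : ℝ) (hc₁ : 1 / 2 ≤ c) (hc₂ : c < 1)
    (ha : 0 ≤ a) :
    ∃ K : ℝ, 0 < K ∧ ∀ (Δ : ℝ), 0 < Δ → ∀ (r : ℕ), 1 ≤ r →
      ∀ g : ℕ → ℝ,
        (∀ j ∈ Finset.Icc 1 r, 0 < g j ∧ g j ≤ Δ * c ^ (((j : ℝ) - 1) - a)) →
        (∑ j ∈ Finset.Icc 1 r, g j) ≤ Δ →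
        (∑ j ∈ Finset.Icc 1 r, g j * logb 2 (Δ / g j)) ≤ K * Δ := by
  have hc : 0 < c := by linarith
  have hlog2 : 0 < log 2 := log_pos one_lt_two
  set s : ℝ := c ^ (1 / 2 : ℝ) with hs
  have hs0 : 0 < s := rpow_pos_of_pos hc _
  have hs1 : s < 1 := rpow_lt_one hc.le hc₂ (by norm_num)
  set A : ℝ := 2 / log 2 * c ^ ((-1 - a) / 2) with hA
  have hA0 : 0 < A := by positivity
  refine ⟨A * (1 - s)⁻¹, mul_pos hA0 (inv_pos.2 (by linarith)), ?_⟩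
  intro Δ hΔ r _ g hg _
  have hterm : ∀ j ∈ Finset.Icc 1 r, g j * logb 2 (Δ / g j) ≤ Δ * A * s ^ j := by
    intro j hj
    obtain ⟨hpos, hle⟩ := hg j hj
    have hx : 0 < g j / Δ := div_pos hpos hΔ
    have hxle : g j / Δ ≤ c ^ (((j : ℝ) - 1) - a) := by
      rwa [div_le_iff₀' hΔ]
    have hsqrt : (c ^ (((j : ℝ) - 1) - a)) ^ (1 / 2 : ℝ) = c ^ ((-1 - a) / 2) * s ^ j := by
      rw [hs, ← rpow_natCast, ← rpow_mul hc.le, ← rpow_mul hc.le, ← rpow_add hc]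
      congr 1
      ring
    calc g j * logb 2 (Δ / g j) = Δ * (g j / Δ * logb 2 (g j / Δ)⁻¹) := by
          rw [inv_div]
          field_simp
      _ ≤ Δ * (2 / log 2 * (g j / Δ) ^ (1 / 2 : ℝ)) :=
          mul_le_mul_of_nonneg_left (mul_logb_inv_le hx) hΔ.le
      _ ≤ Δ * (2 / log 2 * (c ^ (((j : ℝ) - 1) - a)) ^ (1 / 2 : ℝ)) := by gcongr
      _ = Δ * A * s ^ j := by rw [hsqrt, hA]; ring
  have hgeom : ∑ j ∈ Finset.Icc 1 r, s ^ j ≤ (1 - s)⁻¹ := by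
    rw [← tsum_geometric_of_lt_one hs0.le hs1]
    exact (summable_geometric_of_lt_one hs0.le hs1).sum_le_tsum _
      fun j _ => pow_nonneg hs0.le j
  calc ∑ j ∈ Finset.Icc 1 r, g j * logb 2 (Δ / g j)
      ≤ ∑ j ∈ Finset.Icc 1 r, Δ * A * s ^ j := Finset.sum_le_sum hterm
    _ = Δ * A * ∑ j ∈ Finset.Icc 1 r, s ^ j := by rw [Finset.mul_sum]
    _ ≤ Δ * A * (1 - s)⁻¹ := by gcongr
    _ = A * (1 - s)⁻¹ * Δ := by ring
end

section
/- Let c be a real number with 1/2 ≤ c < 1 and let a ≥ 0 be a real constant. Then there exists a constant K = K(c, a) > 0 with the following property. Let n > 0 be a real number and let Δ_0, …, Δ_t be positive reals with Δ_0 + ⋯ + Δ_t = n. Suppose that for each i the gap Δ_i is refined into positive reals g_{i,1}, …, g_{i,r_i} with g_{i,1} + ⋯ + g_{i,r_i} = Δ_i, and that the sequence (g_{i,1}, …, g_{i,r_i}) is the concatenation of two (possibly empty) subsequences, each of which satisfies the geometric-decay condition that its j-th term is at most Δ_i · c^{(j−1) − a}. Then Σ_{i=0}^{t} Σ_{j=1}^{r_i}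 g_{i,j} · log₂(n/g_{i,j}) ≤ Σ_{i=0}^{t} Δ_i · log₂(n/Δ_i) + K · n. -/
/-!
Writing `g log (n / g) = g log (n / Δ) + g log (Δ / g)` and using that the pieces of a gap sum to
`Δ`, the excess of the refined entropy over the query entropy is `∑ g log (Δ / g)`, which has to be
bounded by a constant multiple of `Δ` inside each gap. Since `log x ≤ 2 √x`, each term is at most
`2 √(Δ g)`, and under the decay hypothesis this is at most `2 Δ √(c ^ (-a)) (√c) ^ (j - 1)`
(`mul_log_div_le`). A geometric series of ratio `√c < 1` then bounds each of the two decaying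
sequences (`sum_mul_log_div_le`), and summing over the gaps gives the linear term.
-/

open Real Finset

/-- One term of a decaying sequence, indexed from `0`. -/
lemma mul_log_div_le {c a D y : ℝ} (hc : 0 < c) (hD : 0 < D) (hy : 0 < y) (k : ℕ)
    (h : y ≤ D * c ^ ((k : ℝ) - a)) :
    y * Real.log (D / y) ≤ 2 * D * √(c ^ (-a)) * √c ^ k := by
  have hq : 0 < D / y := div_pos hD hy
  have h1 : Real.log (D / y) ≤ 2 * √(D / y) := by
    have h2 := Real.log_le_sub_one_of_pos (Real.sqrt_pos.2 hq)
    rw [Real.log_sqrt hq.le] at h2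
    linarith
  have h3 : y * √(D / y) = √(D * y) := by
    rw [← Real.sqrt_sq hy.le, ← Real.sqrt_mul (sq_nonneg y), Real.sqrt_sq hy.le]
    congr 1
    field_simp
  have h4 : √(D * y) ≤ D * (√(c ^ (-a)) * √c ^ k) := by
    apply Real.sqrt_le_iff.2
    refine ⟨by positivity, ?_⟩
    have h5 : (D * (√(c ^ (-a)) * √c ^ k)) ^ 2 = D * (D * c ^ ((k : ℝ) - a)) := by
      rw [mul_pow, mul_pow, Real.sq_sqrt (by positivity), ← pow_mul, mul_comm k 2, pow_mul,
        Real.sq_sqrt hc.le, sub_eq_neg_add, Real.rpow_add hc, Real.rpow_natCast]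
      ring
    rw [h5]
    gcongr
  calc y * Real.log (D / y) ≤ y * (2 * √(D / y)) := by gcongr
    _ = 2 * √(D * y) := by rw [← h3]; ring
    _ ≤ 2 * (D * (√(c ^ (-a)) * √c ^ k)) := by gcongr
    _ = _ := by ring

lemma sum_mul_log_div_le {c a D : ℝ} (hc : 0 < c) (hc' : c < 1) (hD : 0 < D) (m : ℕ) (y : ℕ → ℝ)
    (hy : ∀ k < m, 0 < y k) (h : ∀ k < m, y k ≤ D * c ^ ((k : ℝ) - a)) :
    ∑ k ∈ Finset.range m, y k * Real.log (D / y k) ≤ 2 * D * √(c ^ (-a)) * (1 - √c)⁻¹ := by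
  have hs : √c < 1 := by
    rw [Real.sqrt_lt' one_pos]
    simpa using hc'
  calc ∑ k ∈ Finset.range m, y k * Real.log (D / y k)
      ≤ ∑ k ∈ Finset.range m, 2 * D * √(c ^ (-a)) * √c ^ k := by
        refine Finset.sum_le_sum fun k hk => ?_
        have hk := Finset.mem_range.1 hk
        exact mul_log_div_le hc hD (hy k hk) k (h k hk)
    _ = 2 * D * √(c ^ (-a)) * ∑ k ∈ Finset.range m, √c ^ k := by rw [Finset.mul_sum]
    _ ≤ _ := by
        gcongr
        rw [← tsum_geometric_of_lt_one (Real.sqrt_nonneg c) hs]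
        exact (summable_geometric_of_lt_one (Real.sqrt_nonneg c) hs).sum_le_tsum _
          fun k _ => by positivity

lemma sum_Icc_one_eq_sum_range (f : ℕ → ℝ) (m : ℕ) :
    ∑ j ∈ Finset.Icc 1 m, f j = ∑ k ∈ Finset.range m, f (k + 1) := by
  have : Finset.Icc 1 m = Finset.Ico 1 (m + 1) := by
    ext; simp
  rw [this, Finset.sum_Ico_eq_sum_range]
  simp [add_comm]

/-- Abstract form of Lemma 3.1: B(P_t) = B(S_t) + O(n). Each query gap Δ_i is refined
    into pivot gaps forming the concatenation of two geometrically decaying sequences. -/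
theorem pivot_entropy_eq_query_entropy_plus_linear
    (c a : ℝ) (hc₁ : 1 / 2 ≤ c) (hc₂ : c < 1) (ha : 0 ≤ a) :
    ∃ K : ℝ, 0 < K ∧ ∀ (n : ℝ), 0 < n → ∀ (t : ℕ)
      (Δ : ℕ → ℝ) (r : ℕ → ℕ) (g : ℕ → ℕ → ℝ),
      (∀ i ∈ Finset.range (t + 1), 0 < Δ i) →
      (∑ i ∈ Finset.range (t + 1), Δ i) = n →
      (∀ i ∈ Finset.range (t + 1), ∀ j ∈ Finset.Icc 1 (r i), 0 < g i j) →
      (∀ i ∈ Finset.range (t + 1), (∑ j ∈ Finset.Icc 1 (r i), g i j) = Δ i) →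
      (∀ i ∈ Finset.range (t + 1), ∃ s : ℕ, s ≤ r i ∧
        (∀ j ∈ Finset.Icc 1 s, g i j ≤ Δ i * c ^ (((j : ℝ) - 1) - a)) ∧
        (∀ j ∈ Finset.Icc 1 (r i - s), g i (s + j) ≤ Δ i * c ^ (((j : ℝ) - 1) - a))) →
      (∑ i ∈ Finset.range (t + 1), ∑ j ∈ Finset.Icc 1 (r i), g i j * logb 2 (n / g i j))
        ≤ (∑ i ∈ Finset.range (t + 1), Δ i * logb 2 (n / Δ i)) + K * n := by
  have hc : 0 < c := by linarith
  have hs : 0 < 1 - √c := by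
    rw [sub_pos, Real.sqrt_lt' one_pos]
    simpa using hc₂
  have hl : 0 < Real.log 2 := Real.log_pos one_lt_two
  refine ⟨4 * √(c ^ (-a)) * (1 - √c)⁻¹ / Real.log 2, by positivity, ?_⟩
  intro n hn t Δ r g hΔ hsum hg hgsum hdec
  rw [← hsum, Finset.mul_sum, ← Finset.sum_add_distrib, hsum]
  refine Finset.sum_le_sum fun i hi => ?_
  have hD := hΔ i hi
  have hsplit : ∑ j ∈ Finset.Icc 1 (r i), g i j * logb 2 (n / g i j)
      = Δ i * logb 2 (n / Δ i)
        + (∑ j ∈ Finset.Icc 1 (r i), g i j * Real.log (Δ i / g i j)) / Real.log 2 := by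
    conv_rhs => rw [← hgsum i hi, Finset.sum_mul, hgsum i hi]
    rw [Finset.sum_div, ← Finset.sum_add_distrib]
    refine Finset.sum_congr rfl fun j hj => ?_
    have hj := hg i hi j hj
    simp only [Real.logb]
    rw [Real.log_div hn.ne' hj.ne', Real.log_div hn.ne' hD.ne', Real.log_div hD.ne' hj.ne']
    ring
  obtain ⟨s, hsr, h1, h2⟩ := hdec i hi
  have key : ∑ j ∈ Finset.Icc 1 (r i), g i j * Real.log (Δ i / g i j)
      ≤ 4 * √(c ^ (-a)) * (1 - √c)⁻¹ * Δ i := by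
    obtain ⟨m, hm⟩ := Nat.exists_eq_add_of_le hsr
    rw [sum_Icc_one_eq_sum_range, hm, Finset.sum_range_add]
    have b1 := sum_mul_log_div_le (a := a) hc hc₂ hD s (fun k => g i (k + 1))
      (fun k hk => hg i hi _ (Finset.mem_Icc.2 (by omega)))
      (fun k hk => by simpa using h1 (k + 1) (Finset.mem_Icc.2 (by omega)))
    have b2 := sum_mul_log_div_le (a := a) hc hc₂ hD m (fun k => g i (s + k + 1))
      (fun k hk => hg i hi _ (Finset.mem_Icc.2 (by omega)))
      (fun k hk => by simpa [add_assoc] using h2 (k + 1) (Finset.mem_Icc.2 (by omega)))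
    linarith
  rw [hsplit, div_mul_eq_mul_div]
  gcongr
end

section
/- Fix a real constant b ≥ 1. For every ε > 0 there exists a constant c_ε = c(ε, b) > 0 with the following property. Let n ≥ 4 be a real number, let Δ_0, …, Δ_k be positive reals with Δ_0 + ⋯ + Δ_k = n and Δ_i ≤ n for all i, and set ℓ_i := log₂(b · (log₂(n/Δ_i) + 1) + b) + 1. Suppose each gap i is partitioned into finitely many 'runs', i.e., real lengths r ≥ 1 summing to Δ_i, with every run length at most 2ℓ_i. Then the total Σ over all runs r (over all gaps) of r · log₂ r satisfies Σ r · log₂ r ≤ ε · Σ_{i=0}^{k} Δ_i · log₂(n/Δ_i) + c_ε · n. -/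
open Real Finset

/-!
The logarithm is sublinear: `logb 2 y ≤ δ * y + C` for every `δ > 0`, with `C` depending only on `δ`.
Applying this to the outer and to the inner logarithm bounds the logarithm of the maximal run
length of a gap by `ε * logb 2 (n / Δ i) + c` (`exists_logb_run_bound`). Each run `r` then
contributes at most `r * (ε * logb 2 (n / Δ i) + c)`; since the runs of gap `i` sum to `Δ i` and
the gaps sum to `n`, summation gives the theorem. A single logarithm would already be sublinear, so
the outer one is only bounded linearly, with `δ = 1`.
-/

/-- A tangent line of slope `δ` lies above the base-2 logarithm. -/
lemma exists_logb_le_linear (δ : ℝ) (hδ : 0 < δ) :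
    ∃ C : ℝ, ∀ y : ℝ, 0 < y → logb 2 y ≤ δ * y + C := by
  have h2 : 0 < Real.log 2 := Real.log_pos (by norm_num)
  have hd : 0 < δ * Real.log 2 := mul_pos hδ h2
  refine ⟨(-1 - Real.log (δ * Real.log 2)) / Real.log 2, fun y hy => ?_⟩
  -- `log t ≤ t - 1` at `t = δ * log 2 * y`
  have h := Real.log_le_sub_one_of_pos (mul_pos hd hy)
  rw [Real.log_mul hd.ne' hy.ne'] at h
  have e : δ * y + (-1 - Real.log (δ * Real.log 2)) / Real.log 2
      = (δ * Real.log 2 * y - 1 - Real.log (δ * Real.log 2)) / Real.log 2 := by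
    field_simp
    ring
  rw [e, Real.logb]
  gcongr
  linarith

/-- The logarithm of the maximal run length of a gap grows sublinearly in `L = logb 2 (n / Δ i)`. -/
lemma exists_logb_run_bound (b : ℝ) (hb : 1 ≤ b) (ε : ℝ) (hε : 0 < ε) :
    ∃ c : ℝ, 0 < c ∧ ∀ L : ℝ, 0 ≤ L →
      logb 2 (2 * (logb 2 (b * (L + 1) + b) + 1)) ≤ ε * L + c := by
  have hb0 : 0 < b := by linarith
  obtain ⟨C₁, h₁⟩ := exists_logb_le_linear 1 one_pos
  -- this slope turns the inner argument `b * L` into `(ε / 2) * L`, and the outer factor is `2`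
  obtain ⟨C₂, h₂⟩ := exists_logb_le_linear (ε / (2 * b)) (by positivity)
  refine ⟨max 1 (2 * ε + 2 * C₂ + 2 + C₁), by positivity, fun L hL => ?_⟩
  have hbL : 0 ≤ b * L := by positivity
  have harg : 1 ≤ b * (L + 1) + b := by linarith
  have hA : 0 ≤ logb 2 (b * (L + 1) + b) := Real.logb_nonneg (by norm_num) harg
  have hout := h₁ (2 * (logb 2 (b * (L + 1) + b) + 1)) (by linarith)
  have hin := h₂ (b * (L + 1) + b) (by linarith)
  have e : ε / (2 * b) * (b * (L + 1) + b) = ε / 2 * L + ε := by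
    field_simp
    ring
  rw [e] at hin
  have := le_max_right 1 (2 * ε + 2 * C₂ + 2 + C₁)
  linarith

/-- Abstract form of Lemma 4.1: the total information content of the runs is
    o(B(S_t)) + O(n), quantified as: for every ε > 0 there is c_ε with
    Σ_runs r log₂ r ≤ ε · Σ_i Δ_i log₂(n/Δ_i) + c_ε · n. -/
theorem runs_info_content_small (b : ℝ) (hb : 1 ≤ b) (ε : ℝ) (hε : 0 < ε) :
    ∃ cε : ℝ, 0 < cε ∧ ∀ (n : ℝ), 4 ≤ n → ∀ (k : ℕ)
      (Δ : ℕ → ℝ) (m : ℕ → ℕ) (r : ℕ → ℕ → ℝ),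
      (∀ i ∈ Finset.range (k + 1), 0 < Δ i ∧ Δ i ≤ n) →
      (∑ i ∈ Finset.range (k + 1), Δ i) = n →
      (∀ i ∈ Finset.range (k + 1), ∀ j ∈ Finset.Icc 1 (m i),
        1 ≤ r i j ∧ r i j ≤ 2 * (logb 2 (b * (logb 2 (n / Δ i) + 1) + b) + 1)) →
      (∀ i ∈ Finset.range (k + 1), (∑ j ∈ Finset.Icc 1 (m i), r i j) = Δ i) →
      (∑ i ∈ Finset.range (k + 1), ∑ j ∈ Finset.Icc 1 (m i), r i j * logb 2 (r i j))
        ≤ ε * (∑ i ∈ Finset.range (k + 1), Δ i * logb 2 (n / Δ i)) + cε * n := by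
  obtain ⟨c, hc, hbound⟩ := exists_logb_run_bound b hb ε hε
  refine ⟨c, hc, fun n hn k Δ m r hΔ hsum hr hrsum => ?_⟩
  calc (∑ i ∈ Finset.range (k + 1), ∑ j ∈ Finset.Icc 1 (m i), r i j * logb 2 (r i j))
      ≤ ∑ i ∈ Finset.range (k + 1), (ε * (Δ i * logb 2 (n / Δ i)) + c * Δ i) := by
        refine Finset.sum_le_sum fun i hi => ?_
        obtain ⟨hpos, hle⟩ := hΔ i hi
        have hL : 0 ≤ logb 2 (n / Δ i) :=
          Real.logb_nonneg (by norm_num) ((one_le_div hpos).2 hle)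
        calc (∑ j ∈ Finset.Icc 1 (m i), r i j * logb 2 (r i j))
            ≤ ∑ j ∈ Finset.Icc 1 (m i), r i j * (ε * logb 2 (n / Δ i) + c) := by
              refine Finset.sum_le_sum fun j hj => ?_
              obtain ⟨h1, h2⟩ := hr i hi j hj
              refine mul_le_mul_of_nonneg_left ?_ (by linarith)
              exact (Real.logb_le_logb_of_le (by norm_num) (by linarith) h2).trans (hbound _ hL)
          _ = ε * (Δ i * logb 2 (n / Δ i)) + c * Δ i := by
              rw [← Finset.sum_mul, hrsum i hi]
              ring
    _ = ε * (∑ i ∈ Finset.range (k + 1), Δ i * logb 2 (n / Δ i)) + c * n := by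
        rw [Finset.sum_add_distrib, ← Finset.mul_sum, ← Finset.mul_sum, hsum]
end
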